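/- Let v ∈ ℝ, σ₁ > 0, σ₂ > 0 and σ₁₂ ∈ ℝ with |σ₁₂| < σ₁·σ₂, and set ρ = σ₁₂/(σ₁·σ₂). The function s₁₂ ↦ p₁₂(v/σ₁, v/σ₂, s₁₂/(σ₁·σ₂)) (the orthant probability as a function of the covariance, with σ₁ and σ₂ held fixed) is differentiable at s₁₂ = σ₁₂ and its derivative there equals (1/(σ₁·σ₂))·f(v/σ₁, v/σ₂|ρ). -/

import Mathlib

open MeasureTheory

/-- The Gaussian tail function `Q(a) = ∫_a^∞ φ(t) dt`, where `φ` is the standard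
normal density. -/
noncomputable def Qtail (a : ℝ) : ℝ :=
  ∫ t in Set.Ioi a, (1 / Real.sqrt (2 * Real.pi)) * Real.exp (-t ^ 2 / 2)

/-- The standardized bivariate Gaussian density `f(y₁,y₂|ρ)` with correlation
coefficient `ρ`. -/
noncomputable def biGauss (y₁ y₂ ρ : ℝ) : ℝ :=
  (1 / (2 * Real.pi * Real.sqrt (1 - ρ ^ 2))) *
    Real.exp (-(y₁ ^ 2 - 2 * ρ * y₁ * y₂ + y₂ ^ 2) / (2 * (1 - ρ ^ 2)))

/-- The orthant probability `p₁₂(a,b,ρ) = ∫_a^∞ ∫_b^∞ f(y₁,y₂|ρ) dy₂ dy₁`. -/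
noncomputable def orthantProb (a b ρ : ℝ) : ℝ :=
  ∫ y₁ in Set.Ioi a, ∫ y₂ in Set.Ioi b, biGauss y₁ y₂ ρ

/-- The function `g(κ₁,κ₂,ϱ)` from the paper. -/
noncomputable def gFun (κ₁ κ₂ ϱ : ℝ) : ℝ :=
  (κ₁ / Real.sqrt (2 * Real.pi)) * Real.exp (-κ₁ ^ 2 / 2) *
      Qtail ((κ₂ - ϱ * κ₁) / Real.sqrt (1 - ϱ ^ 2))
    - ϱ * biGauss κ₁ κ₂ ϱ

/-!
Completing the square gives `f(y, t | ρ) = φ(y) · φ((t - ρ y) / √(1 - ρ²)) / √(1 - ρ²)`, so the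
inner integral of `p₁₂` is `φ(y) · Q((b - ρ y) / √(1 - ρ²))`. Its `ρ`-derivative turns out to be
the total derivative `-∂f/∂y (y, b | ρ)`, which is dominated locally uniformly in `ρ` by
`(|y| + |b|) · φ(y)` up to a constant. Differentiating under the outer integral and applying the
fundamental theorem of calculus on `(a, ∞)` leaves `f(a, b | ρ)`.
-/

open ProbabilityTheory Filter Set
open scoped Topology

/-- The standard normal density. -/
local notation "φ" => gaussianPDFReal 0 1

theorem gaussianPDFReal_zero_one (t : ℝ) :
    φ t = 1 / √(2 * Real.pi) * Real.exp (-t ^ 2 / 2) := by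
  simp [gaussianPDFReal]

theorem continuous_gaussianPDFReal (μ : ℝ) (v : NNReal) : Continuous (gaussianPDFReal μ v) := by
  rw [gaussianPDFReal_def]
  fun_prop

theorem gaussianPDFReal_le (μ : ℝ) (v : NNReal) (x : ℝ) :
    gaussianPDFReal μ v x ≤ (√(2 * Real.pi * v))⁻¹ := by
  refine mul_le_of_le_one_right (by positivity) (Real.exp_le_one_iff.2 ?_)
  exact div_nonpos_of_nonpos_of_nonneg (neg_nonpos.2 (sq_nonneg _)) (by positivity)

theorem gaussianPDFReal_zero_one_le_one (t : ℝ) : φ t ≤ 1 := by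
  refine (gaussianPDFReal_le 0 1 t).trans (inv_le_one_of_one_le₀ (Real.one_le_sqrt.2 ?_))
  rw [NNReal.coe_one, mul_one]
  linarith [Real.pi_gt_three]

theorem integrable_mul_gaussianPDFReal (μ : ℝ) (v : NNReal) :
    Integrable fun x => x * gaussianPDFReal μ v x := by
  rcases eq_or_ne v 0 with rfl | hv
  · simp
  have h : Integrable id (gaussianReal μ v) := (memLp_id_gaussianReal 1).integrable le_rfl
  rw [gaussianReal_of_var_ne_zero μ hv, integrable_withDensity_iff (measurable_gaussianPDF μ v)
    (ae_of_all _ fun _ => gaussianPDF_lt_top)] at h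
  simpa only [id, toReal_gaussianPDF] using h

theorem integrable_abs_add_mul_gaussianPDFReal (μ : ℝ) (v : NNReal) (c : ℝ) :
    Integrable fun y => (|y| + c) * gaussianPDFReal μ v y := by
  simp only [add_mul]
  refine .add ?_ ((integrable_gaussianPDFReal μ v).const_mul c)
  simpa only [norm_mul, Real.norm_eq_abs, abs_of_nonneg (gaussianPDFReal_nonneg μ v _)] using
    (integrable_mul_gaussianPDFReal μ v).norm

theorem hasDerivAt_integral_Ioi {E : Type*} [NormedAddCommGroup E] [NormedSpace ℝ E]
    [CompleteSpace E] {f : ℝ → E} {a c : ℝ} (hca : c < a) (hf : IntegrableOn f (Ioi c))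
    (hfa : ContinuousAt f a) :
    HasDerivAt (fun x => ∫ t in Ioi x, f t) (-f a) a := by
  have hFTC : HasDerivAt (fun x => ∫ t in c..x, f t) (f a) a :=
    intervalIntegral.integral_hasDerivAt_right
      ((intervalIntegrable_iff_integrableOn_Ioc_of_le hca.le).2 (hf.mono_set Ioc_subset_Ioi_self))
      ⟨Ioi c, Ioi_mem_nhds hca, hf.aestronglyMeasurable⟩ hfa
  refine (hFTC.const_sub (∫ t in Ioi c, f t)).congr_of_eventuallyEq ?_
  filter_upwards [Ioi_mem_nhds hca] with x hx
  rw [← intervalIntegral.integral_Ioi_sub_Ioi hf (mem_Ioi.1 hx).le, sub_sub_cancel]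

theorem integral_Ioi_comp_sub_div {E : Type*} [NormedAddCommGroup E] [NormedSpace ℝ E]
    (f : ℝ → E) (b m : ℝ) {s : ℝ} (hs : 0 < s) :
    ∫ t in Ioi b, f ((t - m) / s) = s • ∫ t in Ioi ((b - m) / s), f t := by
  have hpre : (· - m) ⁻¹' Ioi (b - m) = Ioi b := by
    rw [preimage_sub_const_Ioi, sub_add_cancel]
  calc ∫ t in Ioi b, f ((t - m) / s)
      = ∫ t in Ioi (b - m), f (t / s) := hpre ▸
        (measurePreserving_sub_right volume m).setIntegral_preimage_emb
          (measurableEmbedding_subRight m) (fun t => f (t / s)) (Ioi (b - m))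
    _ = s • ∫ t in Ioi ((b - m) / s), f t := by
        simpa only [div_eq_mul_inv, inv_inv] using
          integral_comp_mul_right_Ioi f (b - m) (inv_pos.2 hs)

theorem Qtail_eq_integral (a : ℝ) : Qtail a = ∫ t in Ioi a, φ t := by
  simp only [Qtail, gaussianPDFReal_zero_one]

theorem hasDerivAt_Qtail (a : ℝ) : HasDerivAt Qtail (-φ a) a := by
  rw [funext Qtail_eq_integral]
  exact hasDerivAt_integral_Ioi (sub_one_lt a) (integrable_gaussianPDFReal 0 1).integrableOn
    (continuous_gaussianPDFReal 0 1).continuousAt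

theorem continuous_Qtail : Continuous Qtail :=
  continuous_iff_continuousAt.2 fun a => (hasDerivAt_Qtail a).continuousAt

theorem norm_Qtail_le_one (a : ℝ) : ‖Qtail a‖ ≤ 1 := by
  rw [Qtail_eq_integral, Real.norm_of_nonneg (integral_nonneg (gaussianPDFReal_nonneg 0 1)),
    ← integral_gaussianPDFReal_eq_one 0 one_ne_zero]
  exact setIntegral_le_integral (integrable_gaussianPDFReal 0 1)
    (ae_of_all _ (gaussianPDFReal_nonneg 0 1))

theorem biGauss_nonneg (y t ρ : ℝ) : 0 ≤ biGauss y t ρ := by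
  unfold biGauss
  positivity

theorem biGauss_comm (y t ρ : ℝ) : biGauss y t ρ = biGauss t y ρ := by
  unfold biGauss
  ring_nf

theorem hasDerivAt_biGauss_left (y t ρ : ℝ) :
    HasDerivAt (fun y => biGauss y t ρ) (-((y - ρ * t) / (1 - ρ ^ 2) * biGauss y t ρ)) y := by
  have hquad : HasDerivAt (fun y : ℝ => y ^ 2 - 2 * ρ * y * t + t ^ 2) (2 * y - 2 * ρ * t) y := by
    simpa using (((hasDerivAt_pow 2 y).sub
      (((hasDerivAt_id y).const_mul (2 * ρ)).mul_const t)).add_const (t ^ 2))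
  have hexponent : HasDerivAt (fun y : ℝ => -(y ^ 2 - 2 * ρ * y * t + t ^ 2) / (2 * (1 - ρ ^ 2)))
      (-((y - ρ * t) / (1 - ρ ^ 2))) y := by
    refine (hquad.fun_neg.div_const _).congr_deriv ?_
    rw [← mul_div_mul_left (y - ρ * t) (1 - ρ ^ 2) two_ne_zero]
    ring
  refine (hexponent.exp.const_mul (1 / (2 * Real.pi * √(1 - ρ ^ 2)))).congr_deriv ?_
  unfold biGauss
  ring

section Correlation

variable {ρ : ℝ}

theorem one_sub_sq_pos (hρ : |ρ| < 1) : 0 < 1 - ρ ^ 2 :=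
  sub_pos.2 ((sq_lt_one_iff_abs_lt_one ρ).2 hρ)

theorem biGauss_eq_mul (y t : ℝ) (hρ : |ρ| < 1) :
    biGauss y t ρ = φ y * (φ ((t - ρ * y) / √(1 - ρ ^ 2)) / √(1 - ρ ^ 2)) := by
  have hpos := one_sub_sq_pos hρ
  have hsquare : -(y ^ 2 - 2 * ρ * y * t + t ^ 2) / (2 * (1 - ρ ^ 2)) =
      -y ^ 2 / 2 + -((t - ρ * y) / √(1 - ρ ^ 2)) ^ 2 / 2 := by
    rw [div_pow, Real.sq_sqrt hpos.le]
    field_simp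
    ring
  have hpi : √(2 * Real.pi) * √(2 * Real.pi) = 2 * Real.pi := Real.mul_self_sqrt (by positivity)
  rw [biGauss, hsquare, Real.exp_add, gaussianPDFReal_zero_one, gaussianPDFReal_zero_one]
  nth_rw 1 [← hpi]
  ring

theorem biGauss_le (y t : ℝ) (hρ : |ρ| < 1) : biGauss y t ρ ≤ φ y / √(1 - ρ ^ 2) := by
  rw [biGauss_eq_mul y t hρ, ← mul_one_div (φ y)]
  exact mul_le_mul_of_nonneg_left (div_le_div_of_nonneg_right (gaussianPDFReal_zero_one_le_one _)
    (Real.sqrt_nonneg _)) (gaussianPDFReal_nonneg 0 1 y)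

theorem integrable_biGauss_left (t : ℝ) (hρ : |ρ| < 1) : Integrable fun y => biGauss y t ρ := by
  have hs : √(1 - ρ ^ 2) ≠ 0 := (Real.sqrt_pos.2 (one_sub_sq_pos hρ)).ne'
  simp only [biGauss_comm _ t, biGauss_eq_mul t _ hρ]
  exact ((((integrable_gaussianPDFReal 0 1).comp_div hs).comp_sub_right (ρ * t)).div_const
    _).const_mul _

theorem norm_deriv_biGauss_left_le {r : ℝ} (y t : ℝ) (hρr : |ρ| ≤ r) (hr : r < 1) :
    ‖(y - ρ * t) / (1 - ρ ^ 2) * biGauss y t ρ‖ ≤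
      (|y| + |t|) / (1 - r ^ 2) * (φ y / √(1 - r ^ 2)) := by
  have hρ : |ρ| < 1 := hρr.trans_lt hr
  have hr_pos : 0 < 1 - r ^ 2 :=
    one_sub_sq_pos (by rwa [abs_of_nonneg ((abs_nonneg ρ).trans hρr)])
  have hsq : 1 - r ^ 2 ≤ 1 - ρ ^ 2 := sub_le_sub_left (sq_le_sq.2 (hρr.trans (le_abs_self r))) 1
  have hnum : |y - ρ * t| ≤ |y| + |t| := calc
    |y - ρ * t| ≤ |y| + |ρ| * |t| := (abs_sub _ _).trans_eq (by rw [abs_mul])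
    _ ≤ |y| + |t| := by gcongr; exact mul_le_of_le_one_left (abs_nonneg t) hρ.le
  have hφ := gaussianPDFReal_nonneg 0 1 y
  rw [norm_mul, norm_div, Real.norm_eq_abs, Real.norm_of_nonneg (hr_pos.le.trans hsq),
    Real.norm_of_nonneg (biGauss_nonneg y t ρ)]
  calc |y - ρ * t| / (1 - ρ ^ 2) * biGauss y t ρ
      ≤ |y - ρ * t| / (1 - ρ ^ 2) * (φ y / √(1 - ρ ^ 2)) :=
        mul_le_mul_of_nonneg_left (biGauss_le y t hρ)
          (div_nonneg (abs_nonneg _) (hr_pos.le.trans hsq))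
    _ ≤ (|y| + |t|) / (1 - r ^ 2) * (φ y / √(1 - r ^ 2)) := by gcongr

theorem integrable_deriv_biGauss_left_bound (t r : ℝ) :
    Integrable fun y => (|y| + |t|) / (1 - r ^ 2) * (φ y / √(1 - r ^ 2)) := by
  simp only [div_mul_div_comm]
  exact (integrable_abs_add_mul_gaussianPDFReal 0 1 |t|).div_const _

theorem integrable_deriv_biGauss_left (t : ℝ) (hρ : |ρ| < 1) :
    Integrable fun y => (y - ρ * t) / (1 - ρ ^ 2) * biGauss y t ρ := by
  refine (integrable_deriv_biGauss_left_bound t |ρ|).mono' ?_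
    (ae_of_all _ fun y => norm_deriv_biGauss_left_le y t le_rfl hρ)
  unfold biGauss
  fun_prop

theorem integral_Ioi_deriv_biGauss_left (a t : ℝ) (hρ : |ρ| < 1) :
    ∫ y in Ioi a, (y - ρ * t) / (1 - ρ ^ 2) * biGauss y t ρ = biGauss a t ρ := by
  have hderiv : ∀ y, HasDerivAt (fun y => -biGauss y t ρ)
      ((y - ρ * t) / (1 - ρ ^ 2) * biGauss y t ρ) y := fun y => by
    simpa only [neg_neg] using (hasDerivAt_biGauss_left y t ρ).fun_neg
  have hint := (integrable_deriv_biGauss_left t hρ).integrableOn (s := Ioi a)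
  have hlim : Tendsto (fun y => -biGauss y t ρ) atTop (𝓝 0) :=
    tendsto_zero_of_hasDerivAt_of_integrableOn_Ioi (fun y _ => hderiv y) hint
      (integrable_biGauss_left t hρ).neg.integrableOn
  rw [integral_Ioi_of_hasDerivAt_of_tendsto' (fun y _ => hderiv y) hint hlim, sub_neg_eq_add,
    zero_add]

theorem integral_Ioi_biGauss (y b : ℝ) (hρ : |ρ| < 1) :
    ∫ t in Ioi b, biGauss y t ρ = φ y * Qtail ((b - ρ * y) / √(1 - ρ ^ 2)) := by
  have hs : 0 < √(1 - ρ ^ 2) := Real.sqrt_pos.2 (one_sub_sq_pos hρ)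
  simp only [biGauss_eq_mul y _ hρ]
  rw [integral_const_mul, integral_div, integral_Ioi_comp_sub_div _ b (ρ * y) hs, smul_eq_mul,
    mul_div_cancel_left₀ _ hs.ne', Qtail_eq_integral]

theorem continuous_integral_Ioi_biGauss (b : ℝ) (hρ : |ρ| < 1) :
    Continuous fun y => ∫ t in Ioi b, biGauss y t ρ := by
  simp only [integral_Ioi_biGauss _ b hρ]
  exact (continuous_gaussianPDFReal 0 1).mul (continuous_Qtail.comp (by fun_prop))

theorem integrable_integral_Ioi_biGauss (b : ℝ) (hρ : |ρ| < 1) :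
    Integrable fun y => ∫ t in Ioi b, biGauss y t ρ := by
  simp only [integral_Ioi_biGauss _ b hρ]
  exact (integrable_gaussianPDFReal 0 1).mul_bdd
    (continuous_Qtail.comp (by fun_prop)).aestronglyMeasurable
    (ae_of_all _ fun _ => norm_Qtail_le_one _)

theorem hasDerivAt_sub_mul_div_sqrt (y b : ℝ) (hρ : |ρ| < 1) :
    HasDerivAt (fun r => (b - r * y) / √(1 - r ^ 2))
      (-((y - ρ * b) / (1 - ρ ^ 2) / √(1 - ρ ^ 2))) ρ := by
  have hpos := one_sub_sq_pos hρ
  have hs : 0 < √(1 - ρ ^ 2) := Real.sqrt_pos.2 hpos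
  have hnum : HasDerivAt (fun r : ℝ => b - r * y) (-y) ρ := by
    simpa using ((hasDerivAt_id ρ).mul_const y).const_sub b
  have hden : HasDerivAt (fun r : ℝ => √(1 - r ^ 2)) (-(2 * ρ) / (2 * √(1 - ρ ^ 2))) ρ := by
    simpa using ((hasDerivAt_pow 2 ρ).const_sub 1).sqrt hpos.ne'
  refine (hnum.div hden hs.ne').congr_deriv ?_
  have hsq : √(1 - ρ ^ 2) ^ 2 = 1 - ρ ^ 2 := Real.sq_sqrt hpos.le
  field_simp
  rw [hsq]
  ring

theorem hasDerivAt_integral_Ioi_biGauss (y b : ℝ) (hρ : |ρ| < 1) :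
    HasDerivAt (fun r => ∫ t in Ioi b, biGauss y t r)
      ((y - ρ * b) / (1 - ρ ^ 2) * biGauss y b ρ) ρ := by
  have hQ := ((hasDerivAt_Qtail _).comp ρ (hasDerivAt_sub_mul_div_sqrt y b hρ)).const_mul (φ y)
  have hnear : ∀ᶠ r in 𝓝 ρ, |r| < 1 := continuous_abs.continuousAt.eventually_lt_const hρ
  refine (hQ.congr_deriv ?_).congr_of_eventuallyEq
    (hnear.mono fun r hr => integral_Ioi_biGauss y b hr)
  rw [biGauss_eq_mul y b hρ]
  ring

theorem hasDerivAt_orthantProb (a b : ℝ) (hρ : |ρ| < 1) :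
    HasDerivAt (orthantProb a b) (biGauss a b ρ) ρ := by
  obtain ⟨r, hρr, hr⟩ := exists_between hρ
  have hnear : {x | |x| < r} ∈ 𝓝 ρ := continuous_abs.continuousAt.eventually_lt_const hρr
  rw [← integral_Ioi_deriv_biGauss_left a b hρ]
  refine (hasDerivAt_integral_of_dominated_loc_of_deriv_le (μ := volume.restrict (Ioi a))
    (F := fun x y => ∫ t in Ioi b, biGauss y t x)
    (F' := fun x y => (y - x * b) / (1 - x ^ 2) * biGauss y b x) hnear
    ?_ (integrable_integral_Ioi_biGauss b hρ).restrict ?_ ?_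
    (integrable_deriv_biGauss_left_bound b r).restrict ?_).2
  · exact mem_of_superset hnear fun x hx =>
      (continuous_integral_Ioi_biGauss b (hx.trans hr)).aestronglyMeasurable
  · exact (integrable_deriv_biGauss_left b hρ).aestronglyMeasurable.restrict
  · exact ae_of_all _ fun y x hx => norm_deriv_biGauss_left_le y b hx.le hr
  · exact ae_of_all _ fun y x hx => hasDerivAt_integral_Ioi_biGauss y b (hx.trans hr)

end Correlation

/-- Let `v ∈ ℝ`, `σ₁ > 0`, `σ₂ > 0` and `σ₁₂ ∈ ℝ` with
`|σ₁₂| < σ₁·σ₂`, and set `ρ = σ₁₂/(σ₁·σ₂)`. The function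
`s₁₂ ↦ p₁₂(v/σ₁, v/σ₂, s₁₂/(σ₁·σ₂))` is differentiable at `s₁₂ = σ₁₂` and its
derivative there equals `(1/(σ₁·σ₂))·f(v/σ₁, v/σ₂|ρ)`. -/
theorem orthantProb_hasDerivAt_sigma12 (v σ₁ σ₂ σ₁₂ : ℝ) (hσ₁ : 0 < σ₁) (hσ₂ : 0 < σ₂)
    (hσ₁₂ : |σ₁₂| < σ₁ * σ₂) :
    HasDerivAt (fun s₁₂ => orthantProb (v / σ₁) (v / σ₂) (s₁₂ / (σ₁ * σ₂)))
      ((1 / (σ₁ * σ₂)) * biGauss (v / σ₁) (v / σ₂) (σ₁₂ / (σ₁ * σ₂))) σ₁₂ := by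
  have hpos : 0 < σ₁ * σ₂ := mul_pos hσ₁ hσ₂
  have hρ : |σ₁₂ / (σ₁ * σ₂)| < 1 := by rwa [abs_div, abs_of_pos hpos, div_lt_one hpos]
  have hscale : HasDerivAt (fun s => s / (σ₁ * σ₂)) (1 / (σ₁ * σ₂)) σ₁₂ :=
    (hasDerivAt_id σ₁₂).div_const _
  exact ((hasDerivAt_orthantProb _ _ hρ).comp σ₁₂ hscale).congr_deriv (mul_comm _ _)
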